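/- Let X be a real or complex Banach algebra with identity and let k be a fixed positive integer. Let g_n : X → X (n = 0,1,2,…) be a sequence of functions for which there exists a real number σ > 0 such that ‖g_n(ξ)‖ ≤ σ‖ξ‖ for all ξ ∈ X and all n. Let a_0, …, a_k, b_0, …, b_k ∈ X be such that Σ_{i=0}^{k} (‖a_i‖ + σ‖b_i‖) < 1. Then every solution (x_n)_{n ≥ −k} of the difference equation x_{n+1} = Σ_{i=0}^{k} a_i x_{n−i} + g_n(Σ_{i=0}^{k} b_i x_{n−i}) with initial values x_0, x_{−1}, …, x_{−k} ∈ X satisfies ‖x_n‖ ≤ α^{n/(k+1)} · max{‖x_0‖, ‖x_{−1}‖, …, ‖x_{−k}‖} for all n ≥ 1, where α = Σ_{i=0}^{k} (‖a_i‖ + σ‖b_i‖). -/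

import Mathlib

/-- **Lemma 2 (gas3).** In a real or complex Banach algebra `X` with identity,
if `‖gₙ(ξ)‖ ≤ σ‖ξ‖` for all `n` and `ξ` (with `σ > 0`), and
`∑_{i=0}^{k} (‖aᵢ‖ + σ‖bᵢ‖) < 1`, then every solution of
`x_{n+1} = ∑ᵢ aᵢ x_{n-i} + gₙ(∑ᵢ bᵢ x_{n-i})` satisfies
`‖xₙ‖ ≤ α^{n/(k+1)} max{‖x₀‖,…,‖x_{-k}‖}` where `α = ∑ᵢ (‖aᵢ‖ + σ‖bᵢ‖)`. -/
theorem convergence_linear_argument_equation_banach_algebra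
    {𝕜 X : Type*} [RCLike 𝕜] [NormedRing X] [NormOneClass X]
    [NormedAlgebra 𝕜 X] [CompleteSpace X]
    (k : ℕ) (hk : 0 < k)
    (g : ℕ → X → X) (σ : ℝ) (hσ : 0 < σ)
    (hg : ∀ (n : ℕ) (ξ : X), ‖g n ξ‖ ≤ σ * ‖ξ‖)
    (a b : ℕ → X)
    (hab : ∑ i ∈ Finset.range (k + 1), (‖a i‖ + σ * ‖b i‖) < 1)
    (x : ℤ → X)
    (hx : ∀ n : ℤ, 0 ≤ n → x (n + 1) =
      ∑ i ∈ Finset.range (k + 1), a i * x (n - (i : ℤ)) +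
        g n.toNat (∑ i ∈ Finset.range (k + 1), b i * x (n - (i : ℤ)))) :
    ∀ n : ℤ, 1 ≤ n →
      ‖x n‖ ≤ (∑ i ∈ Finset.range (k + 1), (‖a i‖ + σ * ‖b i‖)) ^ ((n : ℝ) / ((k : ℝ) + 1)) *
        (Finset.univ.sup' Finset.univ_nonempty fun i : Fin (k + 1) => ‖x (-(i : ℤ))‖) := by
  set α := ∑ i ∈ Finset.range (k + 1), (‖a i‖ + σ * ‖b i‖) with hα
  set M := Finset.univ.sup' Finset.univ_nonempty fun i : Fin (k + 1) => ‖x (-(i : ℤ))‖ with hM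
  have hα0 : 0 ≤ α := Finset.sum_nonneg fun i _ => by positivity
  have hMi : ∀ i : Fin (k + 1), ‖x (-(i : ℤ))‖ ≤ M := fun i =>
    Finset.le_sup' (fun i : Fin (k + 1) => ‖x (-(i : ℤ))‖) (Finset.mem_univ i)
  have hM0 : 0 ≤ M := (norm_nonneg _).trans (hMi 0)
  have hk1 : (0 : ℝ) < (k : ℝ) + 1 := by positivity
  have key : ∀ N : ℕ, ∀ m : ℤ, -(k : ℤ) ≤ m → m ≤ N →
      ‖x m‖ ≤ α ^ (((max m 0 : ℤ) : ℝ) / ((k : ℝ) + 1)) * M := by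
    intro N
    induction N with
    | zero =>
      intro m h1 h2
      have h2' : m ≤ 0 := by simpa using h2
      rw [max_eq_right h2']
      have h := hMi ⟨(-m).toNat, by omega⟩
      have e : -(((-m).toNat : ℕ) : ℤ) = m := by omega
      simp only [e] at h
      simpa using h
    | succ n ih =>
      intro m h1 h2
      by_cases hm : m ≤ n
      · exact ih m h1 hm
      obtain rfl : m = (n : ℤ) + 1 := by push_cast at h2; omega
      set B := α ^ (((max ((n : ℤ) - k) 0 : ℤ) : ℝ) / ((k : ℝ) + 1)) * M with hB
      have hxB : ∀ i ∈ Finset.range (k + 1), ‖x ((n : ℤ) - (i : ℤ))‖ ≤ B := by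
        intro i hi
        have hi' := Finset.mem_range.mp hi
        refine (ih _ (by omega) (by omega)).trans ?_
        refine mul_le_mul_of_nonneg_right ?_ hM0
        apply Real.rpow_le_rpow_of_exponent_ge' hα0 hab.le
        · apply div_nonneg _ hk1.le
          exact_mod_cast le_max_right _ _
        · apply div_le_div_of_nonneg_right _ hk1.le
          have : max ((n : ℤ) - k) 0 ≤ max ((n : ℤ) - i) 0 := by omega
          exact Int.cast_le.mpr this
      have hs : ∀ c : ℕ → X, ‖∑ i ∈ Finset.range (k + 1), c i * x ((n : ℤ) - (i : ℤ))‖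
          ≤ ∑ i ∈ Finset.range (k + 1), ‖c i‖ * B := by
        intro c
        refine (norm_sum_le _ _).trans (Finset.sum_le_sum fun i hi => ?_)
        exact (norm_mul_le _ _).trans (mul_le_mul_of_nonneg_left (hxB i hi) (norm_nonneg _))
      have h3 : ‖x ((n : ℤ) + 1)‖ ≤ α * B := by
        rw [hx n (by omega)]
        refine (norm_add_le _ _).trans ?_
        refine (add_le_add (hs a) ((hg _ _).trans
          (mul_le_mul_of_nonneg_left (hs b) hσ.le))).trans (le_of_eq ?_)
        rw [hα, Finset.sum_mul, Finset.mul_sum, ← Finset.sum_add_distrib]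
        exact Finset.sum_congr rfl fun i _ => by ring
      refine h3.trans ?_
      rw [hB, ← mul_assoc]
      refine mul_le_mul_of_nonneg_right ?_ hM0
      rcases hα0.eq_or_lt with h0 | h0
      · rw [← h0, zero_mul]
        exact Real.rpow_nonneg le_rfl _
      · rw [← Real.rpow_one_add' hα0 (by
          have : (0 : ℝ) ≤ ((max ((n : ℤ) - k) 0 : ℤ) : ℝ) / ((k : ℝ) + 1) := by
            apply div_nonneg _ hk1.le
            exact_mod_cast le_max_right _ _
          positivity)]
        apply Real.rpow_le_rpow_of_exponent_ge h0 hab.le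
        rw [div_le_iff₀ hk1, add_mul, div_mul_cancel₀ _ hk1.ne', one_mul]
        have : max ((n : ℤ) + 1) 0 ≤ (k : ℤ) + 1 + max ((n : ℤ) - k) 0 := by omega
        exact_mod_cast this
  intro n hn
  have h := key n.toNat n (by omega) (by omega)
  rwa [max_eq_left (by omega : (0 : ℤ) ≤ n)] at h
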